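/- For each k ∈ ℕ, the set of nonempty compact subsets of ℝ having at most k connected components is closed in the hyperspace of nonempty compact subsets of ℝ; consequently the set of compact sets with finitely many connected components is an Fσ-set. -/

import Mathlib

open Set TopologicalSpace

/-!
A compact set `K` with more than `k` components splits into `k + 1` nonempty disjoint pieces which
are clopen in `K`, hence compact, so these pieces lie in disjoint open sets `U₀, …, Uₖ`. The
conditions `L ⊆ ⋃ i, U i` and `(L ∩ U i).Nonempty` define a Vietoris neighbourhood of `K`, and
each `L` in it again has more than `k` components, because a connected subset of `L` meets only
one of the `U i`.
-/

section OpenSplitting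

open scoped Function Topology

variable {ι X : Type*} [TopologicalSpace X] {U : ι → Set X} {s : Set X}

/-- An open splitting of `s`: disjoint open sets of the ambient space which cover `s` and all
meet `s`. Working with ambient open sets, rather than relatively open subsets of `s`, allows one
family to split many sets at once. -/
structure IsOpenSplitting (U : ι → Set X) (s : Set X) : Prop where
  isOpen : ∀ i, IsOpen (U i)
  inter_nonempty : ∀ i, (s ∩ U i).Nonempty
  pairwise_disjoint : Pairwise (Disjoint on U)
  subset_iUnion : s ⊆ ⋃ i, U i

theorem IsOpenSplitting.subset_of_isPreconnected (h : IsOpenSplitting U s) {t : Set X}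
    (ht : IsPreconnected t) (hts : t ⊆ s) {i : ι} (hi : (t ∩ U i).Nonempty) : t ⊆ U i := by
  refine ht.subset_left_of_subset_union (v := ⋃ j ≠ i, U j) (h.isOpen i)
    (isOpen_biUnion fun j _ => h.isOpen j) ?_ ?_ hi
  · exact disjoint_iUnion₂_right.2 fun j hj => h.pairwise_disjoint hj.symm
  · intro x hx
    obtain ⟨j, hj⟩ := mem_iUnion.1 (h.subset_iUnion (hts hx))
    obtain rfl | hji := eq_or_ne j i
    · exact .inl hj
    · exact .inr (mem_biUnion hji hj)

theorem IsOpenSplitting.nonempty_embedding_connectedComponents (h : IsOpenSplitting U s) :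
    Nonempty (ι ↪ ConnectedComponents s) := by
  choose y hys hyU using h.inter_nonempty
  refine ⟨⟨fun i => ConnectedComponents.mk ⟨y i, hys i⟩, fun i j hij => ?_⟩⟩
  let C : Set X := Subtype.val '' connectedComponent (⟨y j, hys j⟩ : s)
  have hC : IsPreconnected C :=
    isPreconnected_connectedComponent.image _ continuous_subtype_val.continuousOn
  have hyi : y i ∈ C := mem_image_of_mem _ (ConnectedComponents.coe_eq_coe'.1 hij)
  have hyj : y j ∈ C := mem_image_of_mem _ mem_connectedComponent
  have hCU : C ⊆ U j :=
    h.subset_of_isPreconnected hC (Subtype.coe_image_subset _ _) ⟨y j, hyj, hyU j⟩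
  exact h.pairwise_disjoint.eq (not_disjoint_iff.2 ⟨y i, hyU i, hCU hyi⟩)

theorem IsOpenSplitting.eventually_nhds [Finite ι] {K : Compacts X} (h : IsOpenSplitting U K) :
    ∀ᶠ L : Compacts X in 𝓝 K, IsOpenSplitting U L := by
  have meets : ∀ᶠ L : Compacts X in 𝓝 K, ∀ i, ((L : Set X) ∩ U i).Nonempty :=
    Filter.eventually_all.2 fun i =>
      (Compacts.isOpen_inter_nonempty_of_isOpen (h.isOpen i)).mem_nhds (h.inter_nonempty i)
  have covered : ∀ᶠ L : Compacts X in 𝓝 K, (L : Set X) ⊆ ⋃ i, U i :=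
    (Compacts.isOpen_subsets_of_isOpen (isOpen_iUnion h.isOpen)).mem_nhds h.subset_iUnion
  filter_upwards [meets, covered] with L hLU hL
  exact ⟨h.isOpen, hLU, h.pairwise_disjoint, hL⟩

theorem natCast_lt_mk_iff_nonempty_embedding {α : Type*} {k : ℕ} :
    (k : Cardinal) < Cardinal.mk α ↔ Nonempty (Fin (k + 1) ↪ α) := by
  rw [← Cardinal.natCast_add_one_le_iff, ← Nat.cast_add_one, ← Cardinal.lift_mk_fin,
    ← Cardinal.lift_uzero (Cardinal.mk α), Cardinal.lift_mk_le']

theorem exists_fun_isClopen_of_lt_mk_connectedComponents {k : ℕ}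
    (hk : k < Cardinal.mk (ConnectedComponents X)) :
    ∃ V : Fin (k + 1) → Set X, (∀ i, IsClopen (V i)) ∧ (∀ i, (V i).Nonempty) ∧
      Pairwise (Disjoint on V) ∧ ⋃ i, V i = univ := by
  cases finite_or_infinite (ConnectedComponents X) with
  | inl _ =>
    obtain ⟨e⟩ := natCast_lt_mk_iff_nonempty_embedding.1 hk
    let f : X → Fin (k + 1) := Function.invFun e ∘ ConnectedComponents.mk
    have hf : Function.Surjective f :=
      (Function.invFun_surjective e.injective).comp ConnectedComponents.surjective_coe
    refine ⟨fun i => f ⁻¹' {i}, fun i => ?_, fun i => hf i,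
      fun i j hij => .preimage f (by simpa using hij),
      iUnion_eq_univ_iff.2 fun x => ⟨f x, rfl⟩⟩
    exact (isClopen_discrete (Function.invFun e ⁻¹' {i})).preimage
      ConnectedComponents.continuous_coe
  | inr _ => exact ConnectedComponents.exists_fun_isClopen_of_infinite X (k + 1) k.succ_pos

theorem exists_isOpen_superset_pairwise_disjoint [R1Space X] [Finite ι] {K : ι → Set X}
    (hK : ∀ i, IsCompact (K i))
    (hsep : Pairwise fun i j => ∀ x ∈ K i, ∀ y ∈ K j, ¬Inseparable x y) :
    ∃ U : ι → Set X, (∀ i, IsOpen (U i) ∧ K i ⊆ U i) ∧ Pairwise (Disjoint on U) := by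
  have hd : Pairwise (Disjoint on fun i => 𝓝ˢ (K i)) := fun i j hij =>
    (hK i).disjoint_nhdsSet_left.2 fun x hx => (hK j).disjoint_nhdsSet_right.2 fun y hy =>
      disjoint_nhds_nhds_iff_not_inseparable.2 (hsep hij x hx y hy)
  exact hd.exists_mem_filter_basis_of_disjoint fun i => hasBasis_nhdsSet (K i)

theorem exists_isOpenSplitting_of_isCompact [R1Space X] (hs : IsCompact s) {k : ℕ}
    (hk : k < Cardinal.mk (ConnectedComponents s)) :
    ∃ U : Fin (k + 1) → Set X, IsOpenSplitting U s := by
  have : CompactSpace s := isCompact_iff_compactSpace.1 hs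
  obtain ⟨V, hV, hne, hdisj, hcover⟩ := exists_fun_isClopen_of_lt_mk_connectedComponents hk
  have hcompact (i) : IsCompact (Subtype.val '' V i) :=
    (hV i).isClosed.isCompact.image continuous_subtype_val
  have hsep : Pairwise fun i j =>
      ∀ x ∈ Subtype.val '' V i, ∀ y ∈ Subtype.val '' V j, ¬Inseparable x y := by
    rintro i j hij _ ⟨x, hx, rfl⟩ _ ⟨y, hy, rfl⟩ hxy
    have hxj : x ∈ V j := (((subtype_inseparable_iff x y).2 hxy).mem_open_iff (hV j).isOpen).2 hy
    exact (hdisj hij).notMem_of_mem_left hx hxj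
  obtain ⟨U, hU, hUdisj⟩ := exists_isOpen_superset_pairwise_disjoint hcompact hsep
  refine ⟨U, fun i => (hU i).1, fun i => ?_, hUdisj, fun x hx => ?_⟩
  · obtain ⟨x, hx⟩ := hne i
    exact ⟨x, x.2, (hU i).2 (mem_image_of_mem _ hx)⟩
  · obtain ⟨i, hi⟩ := iUnion_eq_univ_iff.1 hcover ⟨x, hx⟩
    exact mem_iUnion.2 ⟨i, (hU i).2 (mem_image_of_mem _ hi)⟩

theorem isClosed_setOfPred_mk_connectedComponents_le [R1Space X] (k : ℕ) :
    IsClosed {K : Compacts X | Cardinal.mk (ConnectedComponents (K : Set X)) ≤ k} := by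
  rw [← isOpen_compl_iff, isOpen_iff_eventually]
  intro K hK
  obtain ⟨U, hU⟩ := exists_isOpenSplitting_of_isCompact K.isCompact (not_le.1 hK)
  filter_upwards [hU.eventually_nhds] with L hL
  exact not_le.2
    (natCast_lt_mk_iff_nonempty_embedding.2 hL.nonempty_embedding_connectedComponents)

end OpenSplitting

theorem finite_iff_exists_mk_le_natCast {α : Type*} :
    Finite α ↔ ∃ n : ℕ, Cardinal.mk α ≤ n := by
  rw [← Cardinal.lt_aleph0_iff_finite]
  constructor
  · intro h
    obtain ⟨n, hn⟩ := Cardinal.lt_aleph0.1 h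
    exact ⟨n, hn.le⟩
  · rintro ⟨n, hn⟩
    exact hn.trans_lt Cardinal.natCast_lt_aleph0

theorem finitely_many_components_Fsigma_general {X : Type*} [TopologicalSpace X] [R1Space X] :
    (∀ k : ℕ,
      IsClosed {K : NonemptyCompacts X |
        Cardinal.mk (ConnectedComponents (K : Set X)) ≤ k}) ∧
    ∃ F : ℕ → Set (NonemptyCompacts X), (∀ n, IsClosed (F n)) ∧
      {K : NonemptyCompacts X | Finite (ConnectedComponents (K : Set X))} = ⋃ n, F n := by
  have hclosed (k : ℕ) : IsClosed {K : NonemptyCompacts X |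
      Cardinal.mk (ConnectedComponents (K : Set X)) ≤ k} :=
    (isClosed_setOfPred_mk_connectedComponents_le k).preimage NonemptyCompacts.continuous_toCompacts
  refine ⟨hclosed, _, hclosed, ?_⟩
  ext K
  simp only [mem_ofPred_eq, mem_iUnion, finite_iff_exists_mk_le_natCast]

theorem finitely_many_components_Fsigma :
    (∀ k : ℕ,
      IsClosed {K : NonemptyCompacts ℝ |
        Cardinal.mk (ConnectedComponents (K : Set ℝ)) ≤ k}) ∧
    ∃ F : ℕ → Set (NonemptyCompacts ℝ), (∀ n, IsClosed (F n)) ∧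
      {K : NonemptyCompacts ℝ | Finite (ConnectedComponents (K : Set ℝ))} = ⋃ n, F n :=
  finitely_many_components_Fsigma_general
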